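/- Let A be a reduced commutative ring, let C be a commutative ring extension of A that is an essential extension of A, and let B be an intermediate ring, A ⊆ B ⊆ C, such that B is integral over A. Then B is an essential extension of A. -/

import Mathlib

/-!
Let `b ≠ 0` in `B`. Essentiality of `C` gives `a ≠ 0` in `A` with `b ∣ a` in `C`, and integrality
gives a monic `p` with `p(b) = 0`, so that `r = a p` is a nonzero polynomial over `A` vanishing at
`b`. Write `r = X ^ m q` with `q(0) ≠ 0`. Then `b ^ m q(b) = 0`, hence `a ^ m q(b) = 0`, which
exhibits `a ^ m q(0)` as a multiple of `b` in `A[b] ⊆ B`. It is nonzero because `q(0)` is a nonzero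
multiple of `a` and `A` is reduced.
-/

open Polynomial

theorem pow_mul_ne_zero_of_dvd {R : Type*} [CommMonoidWithZero R] [IsReduced R] {a t : R}
    (hat : a ∣ t) (ht : t ≠ 0) (m : ℕ) : a ^ m * t ≠ 0 := by
  intro h
  have hdvd : a ^ m * t ∣ t ^ (m + 1) := by
    rw [pow_succ]
    exact mul_dvd_mul_right (pow_dvd_pow_of_dvd hat m) t
  exact ht (eq_zero_of_pow_eq_zero (zero_dvd_iff.mp (h ▸ hdvd)))

theorem exists_eq_X_pow_natTrailingDegree_mul {R : Type*} [Semiring R] (p : R[X]) :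
    ∃ q : R[X], p = X ^ p.natTrailingDegree * q ∧ q.coeff 0 = p.trailingCoeff := by
  obtain ⟨q, hq⟩ : X ^ p.natTrailingDegree ∣ p :=
    X_pow_dvd_iff.mpr fun _ => coeff_eq_zero_of_lt_natTrailingDegree
  refine ⟨q, hq, ?_⟩
  calc q.coeff 0 = (X ^ p.natTrailingDegree * q).coeff (0 + p.natTrailingDegree) :=
        (coeff_X_pow_mul q _ 0).symm
    _ = p.trailingCoeff := by rw [← hq, zero_add, trailingCoeff]

section

variable {R S : Type*} [CommRing R] [CommRing S] [Algebra R S] {a : R} {b : S} {p : R[X]}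

theorem exists_pow_mul_trailingCoeff_eq_mul_aeval (hba : b ∣ algebraMap R S a)
    (hpb : aeval b p = 0) :
    ∃ s : R[X],
      algebraMap R S (a ^ p.natTrailingDegree * p.trailingCoeff) = b * aeval b s := by
  obtain ⟨q, hq, hq₀⟩ := exists_eq_X_pow_natTrailingDegree_mul p
  set m := p.natTrailingDegree
  have hbq : b ^ m * aeval b q = 0 := by
    rw [← hpb, hq, map_mul, map_pow, aeval_X]
  have haq : algebraMap R S a ^ m * aeval b q = 0 :=
    zero_dvd_iff.mp (hbq ▸ mul_dvd_mul_right (pow_dvd_pow_of_dvd hba m) (aeval b q))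
  have hdivX : aeval b q = b * aeval b q.divX + algebraMap R S p.trailingCoeff := by
    rw [← hq₀]
    simpa only [map_add, map_mul, aeval_X, aeval_C] using
      congrArg (aeval b) (X_mul_divX_add q).symm
  refine ⟨-(C a ^ m * q.divX), ?_⟩
  simp only [map_neg, map_mul, map_pow, aeval_C]
  linear_combination haq - algebraMap R S a ^ m * hdivX

theorem exists_ne_zero_algebraMap_eq_mul_aeval [IsReduced R] (hba : b ∣ algebraMap R S a)
    (hpb : aeval b p = 0) (hap : C a * p ≠ 0) :
    ∃ x : R, x ≠ 0 ∧ ∃ s : R[X], algebraMap R S x = b * aeval b s := by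
  have hapb : aeval b (C a * p) = 0 := by rw [map_mul, hpb, mul_zero]
  have hdvd : a ∣ (C a * p).trailingCoeff := (C_dvd_iff_dvd_coeff a _).mp (dvd_mul_right _ _) _
  exact ⟨_, pow_mul_ne_zero_of_dvd hdvd (trailingCoeff_nonzero_iff_nonzero.mpr hap) _,
    exists_pow_mul_trailingCoeff_eq_mul_aeval hba hapb⟩

end

section

variable {R : Type*} [CommRing R] {A B : Subring R} {b : R}

theorem isIntegral_of_monic_of_coeff_mem {p : R[X]} (hp : p.Monic) (hpA : ∀ n, p.coeff n ∈ A)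
    (hpb : p.eval b = 0) : IsIntegral A b := by
  have hlifts : p ∈ lifts (algebraMap A R) :=
    (lifts_iff_coeff_lifts p).mpr fun n => ⟨⟨p.coeff n, hpA n⟩, rfl⟩
  obtain ⟨q, rfl, -, hq⟩ := lifts_and_natDegree_eq_and_monic hlifts hp
  exact ⟨q, hq, by rwa [← eval_map]⟩

theorem aeval_mem_of_le (hAB : A ≤ B) (hb : b ∈ B) (s : A[X]) : aeval b s ∈ B := by
  rw [aeval_eq_sum_range]
  exact B.sum_mem fun i _ => B.mul_mem (hAB (s.coeff i).2) (B.pow_mem hb i)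

end

theorem stmt_0_general {C : Type*} [CommRing C] (A B : Subring C) (hAB : A ≤ B)
    (hred : IsReduced A)
    (hess : ∀ I : Ideal C, I ≠ ⊥ → ∃ x ∈ I, x ∈ A ∧ x ≠ 0)
    (hroot : ∀ b ∈ B, ∃ p ∈ nonZeroDivisors A[X], aeval b p = 0) :
    ∀ I : Ideal B, I ≠ ⊥ → ∃ x : B, x ∈ I ∧ (x : C) ∈ A ∧ x ≠ 0 := by
  intro I hI
  obtain ⟨b, hbI, hb⟩ := Submodule.exists_mem_ne_zero_of_ne_bot hI
  obtain ⟨a, hba, haA, ha⟩ := hess (Ideal.span {(b : C)}) (by simpa using hb)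
  obtain ⟨p, hp, hpb⟩ := hroot b b.2
  lift a to A using haA
  have hap : Polynomial.C a * p ≠ 0 := by
    simpa [mul_right_mem_nonZeroDivisors_eq_zero_iff hp] using ha
  obtain ⟨x, hx, s, hxs⟩ := exists_ne_zero_algebraMap_eq_mul_aeval
    (Ideal.mem_span_singleton.mp hba) hpb hap
  have hx_mul : Subring.inclusion hAB x = b * ⟨aeval (b : C) s, aeval_mem_of_le hAB b.2 s⟩ :=
    Subtype.ext hxs
  exact ⟨Subring.inclusion hAB x, hx_mul ▸ I.mul_mem_right _ hbI, x.2,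
    (map_ne_zero_iff _ (Subring.inclusion_injective hAB)).mpr hx⟩

/-- Let `A` be a reduced commutative ring, let `C` be a commutative ring
extension of `A` that is an essential extension of `A`, and let `B` be an intermediate
ring, `A ⊆ B ⊆ C`, such that `B` is integral over `A`. Then `B` is an essential
extension of `A`.

Essential extension is formulated ideal-theoretically: every nonzero ideal meets the
subring nontrivially. Integrality of an element is formulated as satisfying a monic
polynomial all of whose coefficients lie in the subring. -/
theorem stmt_0 {C : Type*} [CommRing C] (A B : Subring C) (hAB : A ≤ B)
    (hred : IsReduced A)
    (hess : ∀ I : Ideal C, I ≠ ⊥ → ∃ x ∈ I, x ∈ A ∧ x ≠ 0)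
    (hint : ∀ b ∈ B, ∃ p : Polynomial C, p.Monic ∧ (∀ n, p.coeff n ∈ A) ∧
      Polynomial.eval b p = 0) :
    ∀ I : Ideal B, I ≠ ⊥ → ∃ x : B, x ∈ I ∧ (x : C) ∈ A ∧ x ≠ 0 :=
  stmt_0_general A B hAB hred hess fun b hb =>
    let ⟨_, hp, hpA, hpb⟩ := hint b hb
    let ⟨q, hq, hqb⟩ := isIntegral_of_monic_of_coeff_mem hp hpA hpb
    ⟨q, hq.mem_nonZeroDivisors, hqb⟩
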